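/- Let 0 < τ < 2 be fixed and set α = 1 − τ²/2 and β = √(τ² − τ⁴/4). For each dimension d, let A be a d×d random matrix with i.i.d. standard Gaussian entries, and define the cross-polytope hash h_A of a point x on the unit sphere S^{d−1} as the point of {±e_1, …, ±e_d} closest (in Euclidean distance) to Ax/‖Ax‖. Then for any p, q ∈ S^{d−1} with ‖p − q‖ = τ, one has ln(1 / Pr_A[h_A(p) = h_A(q)]) = (τ²/(4 − τ²))·ln d + O_τ(ln ln d); that is, there exist a constant C_τ > 0 and d₀ (depending only on τ) such that for all d ≥ d₀ and all such p, q, |ln(1 / Pr_A[h_A(p) = h_A(q)]) − (τ²/(4 − τ²))·ln d| ≤ C_τ · ln ln d. -/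

import Mathlib

open MeasureTheory ProbabilityTheory Real

noncomputable section

/-- The standard Gaussian distribution `N(0,1)` on `ℝ`. -/
def stdGaussian : Measure ℝ := gaussianReal 0 1

/-- The distribution of a `d × d` random matrix with i.i.d. standard Gaussian entries. -/
def gaussMatrix (d : ℕ) : Measure (Fin d → Fin d → ℝ) :=
  Measure.pi fun _ => Measure.pi fun _ => stdGaussian

/-- The vertices `{±e_1, …, ±e_d}` of the cross-polytope in `ℝ^d`. -/
def crossPolytope (d : ℕ) : Set (EuclideanSpace ℝ (Fin d)) :=
  {y | ∃ i : Fin d, y = EuclideanSpace.single i (1 : ℝ) ∨ y = EuclideanSpace.single i (-1 : ℝ)}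

/-- Matrix-vector multiplication `A x`, viewed in Euclidean space. -/
def matVec {d : ℕ} (A : Fin d → Fin d → ℝ) (x : EuclideanSpace ℝ (Fin d)) :
    EuclideanSpace ℝ (Fin d) :=
  (WithLp.equiv 2 (Fin d → ℝ)).symm (fun i => ∑ j, A i j * x j)

/-- `h` is a cross-polytope hash family: for every matrix `A` and point `x`, the hash `h A x`
is a point of `{±e_1, …, ±e_d}` closest (in Euclidean distance) to `Ax / ‖Ax‖`
(ties, which occur with probability zero, are broken arbitrarily). -/
def IsCPHash {d : ℕ}
    (h : (Fin d → Fin d → ℝ) → EuclideanSpace ℝ (Fin d) → EuclideanSpace ℝ (Fin d)) : Prop :=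
  ∀ A x, h A x ∈ crossPolytope d ∧
    ∀ z ∈ crossPolytope d,
      dist (‖matVec A x‖⁻¹ • matVec A x) (h A x) ≤ dist (‖matVec A x‖⁻¹ • matVec A x) z


/-- The law of one row of the matrix. -/
def rowM (d : ℕ) : Measure (Fin d → ℝ) := Measure.pi fun _ => gaussianReal 0 1

instance rowM_prob (d : ℕ) : IsProbabilityMeasure (rowM d) := by
  unfold rowM; infer_instance

/-- The linear functional `a ↦ ∑ a_j x_j`. -/
def linF {d : ℕ} (x : EuclideanSpace ℝ (Fin d)) (a : Fin d → ℝ) : ℝ := ∑ j, a j * x j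

lemma gaussMatrix_eq (d : ℕ) : gaussMatrix d = Measure.pi fun _ => rowM d := rfl

lemma measurable_linF {d : ℕ} (x : EuclideanSpace ℝ (Fin d)) : Measurable (linF x) := by
  unfold linF; fun_prop

lemma rowM_map_eval (d : ℕ) (j : Fin d) : (rowM d).map (fun a => a j) = gaussianReal 0 1 := by
  have := Measure.pi_map_eval (μ := fun _ : Fin d => gaussianReal 0 1) j
  simpa [rowM] using this

lemma rowM_id_gaussian (d : ℕ) : HasGaussianLaw (fun a : Fin d → ℝ => (fun j => a j)) (rowM d) := by
  refine iIndepFun.hasGaussianLaw (X := fun j (a : Fin d → ℝ) => a j) (fun j => ?_) ?_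
  · constructor
    rw [rowM_map_eval]
    infer_instance
  · exact iIndepFun_pi (X := fun _ => id) (μ := fun _ : Fin d => gaussianReal 0 1)
      (fun _ => aemeasurable_id)

lemma memLp_eval (d : ℕ) (j : Fin d) : MemLp (fun a : Fin d → ℝ => a j) 2 (rowM d) := by
  have h : HasGaussianLaw (fun a : Fin d → ℝ => a j) (rowM d) := by
    constructor
    rw [rowM_map_eval]
    infer_instance
  exact h.memLp_two

lemma cov_eval (d : ℕ) (i j : Fin d) :
    covariance (fun a : Fin d → ℝ => a i) (fun a => a j) (rowM d) = if i = j then 1 else 0 := by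
  split_ifs with h
  · subst h
    rw [covariance_self (measurable_pi_apply i).aemeasurable]
    have : Var[fun x => x; (rowM d).map (fun a => a i)] = 1 := by
      rw [rowM_map_eval]; simp
    rw [variance_map (X := fun x : ℝ => x) (Y := fun a : Fin d → ℝ => a i) (by fun_prop)
      (measurable_pi_apply i).aemeasurable] at this
    exact this
  · have hI : iIndepFun (fun (j : Fin d) (a : Fin d → ℝ) => a j) (rowM d) :=
      iIndepFun_pi (X := fun _ => id) (μ := fun _ : Fin d => gaussianReal 0 1)
        (fun _ => aemeasurable_id)
    exact (hI.indepFun h).covariance_eq_zero (memLp_eval d i) (memLp_eval d j)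

lemma cov_linF {d : ℕ} (x y : EuclideanSpace ℝ (Fin d)) :
    covariance (linF x) (linF y) (rowM d) = inner ℝ x y := by
  unfold linF
  rw [covariance_fun_sum_fun_sum (μ := rowM d) (X := fun i (a : Fin d → ℝ) => a i * x i) (Y := fun i (a : Fin d → ℝ) => a i * y i)
    (fun i => by simpa [mul_comm] using (memLp_eval d i).const_mul (x i))
    (fun i => by simpa [mul_comm] using (memLp_eval d i).const_mul (y i))]
  simp_rw [covariance_mul_const_left, covariance_mul_const_right, cov_eval]
  simp [PiLp.inner_apply, mul_comm]

/-- pair of functionals as a continuous linear map -/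
def linP {d : ℕ} (x y : EuclideanSpace ℝ (Fin d)) : (Fin d → ℝ) →L[ℝ] ℝ × ℝ :=
  LinearMap.toContinuousLinearMap
    { toFun := fun a => (linF x a, linF y a)
      map_add' := by
        intro a b
        simp [linF, add_mul, Finset.sum_add_distrib]
      map_smul' := by
        intro c a
        simp [linF, Finset.mul_sum, mul_assoc] }

lemma linF_pair_gaussian {d : ℕ} (x y : EuclideanSpace ℝ (Fin d)) :
    HasGaussianLaw (fun a => (linF x a, linF y a)) (rowM d) :=
  (rowM_id_gaussian d).map_fun (linP x y)

lemma linF_gaussian {d : ℕ} (x : EuclideanSpace ℝ (Fin d)) :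
    HasGaussianLaw (linF x) (rowM d) := (linF_pair_gaussian x x).fst

lemma mean_linF {d : ℕ} (x : EuclideanSpace ℝ (Fin d)) : ∫ a, linF x a ∂(rowM d) = 0 := by
  unfold linF
  rw [integral_finsetSum]
  · refine Finset.sum_eq_zero fun j _ => ?_
    rw [integral_mul_const]
    have : ∫ z, z ∂((rowM d).map (fun a => a j)) = 0 := by
      rw [rowM_map_eval]; simp
    rw [integral_map (measurable_pi_apply j).aemeasurable (by fun_prop)] at this
    rw [this, zero_mul]
  · intro j _
    exact ((memLp_eval d j).integrable (by norm_num)).mul_const _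

lemma map_linF {d : ℕ} (x : EuclideanSpace ℝ (Fin d)) :
    (rowM d).map (linF x) = gaussianReal 0 (‖x‖ ^ 2).toNNReal := by
  rw [(linF_gaussian x).map_eq_gaussianReal, mean_linF,
    ← covariance_self (measurable_linF x).aemeasurable, cov_linF, real_inner_self_eq_norm_sq]

lemma indep_linF {d : ℕ} (x y : EuclideanSpace ℝ (Fin d)) (h : inner ℝ x y = 0) :
    IndepFun (linF x) (linF y) (rowM d) :=
  (linF_pair_gaussian x y).indepFun_of_covariance_eq_zero (by rw [cov_linF, h])

/-- Chernoff tail bound. -/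
lemma gauss_tail (v : ℝ) (hv : 0 < v) (t : ℝ) (ht : 0 ≤ t) :
    (gaussianReal 0 v.toNNReal).real {z | t ≤ z} ≤ Real.exp (-t ^ 2 / (2 * v)) := by
  have h := measure_ge_le_exp_mul_mgf (μ := gaussianReal 0 v.toNNReal) (X := id) (t := t / v) t
    (by positivity) (by simpa using integrable_exp_mul_gaussianReal (μ := 0) (v := v.toNNReal) (t / v))
  refine h.trans (le_of_eq ?_)
  rw [mgf_id_gaussianReal]
  simp only [Real.coe_toNNReal v hv.le]
  rw [← Real.exp_add]
  congr 1
  field_simp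
  ring

lemma gauss_abs_tail (v : ℝ) (hv : 0 < v) (t : ℝ) (ht : 0 ≤ t) :
    (gaussianReal 0 v.toNNReal).real {z | t ≤ |z|} ≤ 2 * Real.exp (-t ^ 2 / (2 * v)) := by
  have hsub : {z : ℝ | t ≤ |z|} ⊆ {z | t ≤ z} ∪ {z | t ≤ -z} := by
    intro z hz
    exact le_abs.1 (show t ≤ |z| from hz)
  have hneg : (gaussianReal 0 v.toNNReal).real {z | t ≤ -z} =
      (gaussianReal 0 v.toNNReal).real {z | t ≤ z} := by
    conv_rhs => rw [← neg_zero (G := ℝ), ← gaussianReal_map_neg]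
    rw [map_measureReal_apply (by fun_prop) (show MeasurableSet {z : ℝ | t ≤ z} from measurableSet_Ici)]
    rfl
  calc _ ≤ _ := measureReal_mono hsub
    _ ≤ _ := measureReal_union_le _ _
    _ ≤ _ := by rw [hneg]; linarith [gauss_tail v hv t ht]

/-- Lower bound for intervals. -/
lemma gauss_Icc_lower (v : ℝ) (hv : 0 < v) (a b M : ℝ) (hab : a ≤ b) (ha : |a| ≤ M) (hb : |b| ≤ M) :
    (b - a) * ((√(2 * π * v))⁻¹ * Real.exp (-M ^ 2 / (2 * v)))
      ≤ (gaussianReal 0 v.toNNReal).real (Set.Icc a b) := by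
  have hv' : v.toNNReal ≠ 0 := by simpa using hv
  rw [measureReal_def, gaussianReal_apply_eq_integral _ hv', ENNReal.toReal_ofReal
    (integral_nonneg fun x => gaussianPDFReal_nonneg _ _ _)]
  have h := setIntegral_mono_on (μ := volume) (s := Set.Icc a b)
    (f := fun _ => (√(2 * π * v))⁻¹ * Real.exp (-M ^ 2 / (2 * v)))
    (g := gaussianPDFReal 0 v.toNNReal) (integrableOn_const (by simp))
    (integrable_gaussianPDFReal _ _).integrableOn measurableSet_Icc ?_
  · simpa [hab] using h
  · intro x hx
    rw [gaussianPDFReal, Real.coe_toNNReal v hv.le]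
    have : |x| ≤ M := abs_le.2 ⟨by linarith [(abs_le.1 ha).1, hx.1], by linarith [(abs_le.1 hb).2, hx.2]⟩
    have h2 : x ^ 2 ≤ M ^ 2 := by
      rw [← sq_abs x]; gcongr
    rw [sub_zero]
    gcongr

lemma matVec_apply' {d : ℕ} (A : Fin d → Fin d → ℝ) (x : EuclideanSpace ℝ (Fin d)) (j : Fin d) :
    matVec A x j = linF x (A j) := rfl

lemma dist_single_sq {d : ℕ} (y : EuclideanSpace ℝ (Fin d)) (i : Fin d) (s : ℝ)
    (hs : s = 1 ∨ s = -1) :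
    dist y (EuclideanSpace.single i s) ^ 2 = ‖y‖ ^ 2 + 1 - 2 * (s * y i) := by
  rw [dist_eq_norm, norm_sub_sq_real, EuclideanSpace.inner_single_right, EuclideanSpace.norm_single]
  rcases hs with rfl | rfl <;> simp <;> ring

lemma hash_spec {d : ℕ}
    (h : (Fin d → Fin d → ℝ) → EuclideanSpace ℝ (Fin d) → EuclideanSpace ℝ (Fin d))
    (hh : IsCPHash h) (A : Fin d → Fin d → ℝ) (x : EuclideanSpace ℝ (Fin d)) :
    ∃ i s, (s = 1 ∨ s = -1) ∧ h A x = EuclideanSpace.single i s ∧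
      ∀ j, |linF x (A j)| ≤ s * linF x (A i) := by
  obtain ⟨⟨i, hi⟩, hmin⟩ := hh A x
  obtain ⟨s, hs, hs'⟩ : ∃ s : ℝ, (s = 1 ∨ s = -1) ∧ h A x = EuclideanSpace.single i s := by
    rcases hi with hi | hi
    · exact ⟨1, Or.inl rfl, hi⟩
    · exact ⟨-1, Or.inr rfl, hi⟩
  refine ⟨i, s, hs, hs', ?_⟩
  have key : ∀ j s', (s' = 1 ∨ s' = -1) →
      s' * (‖matVec A x‖⁻¹ * linF x (A j)) ≤ s * (‖matVec A x‖⁻¹ * linF x (A i)) := by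
    intro j s' hs2
    have hm := hmin (EuclideanSpace.single j s') ⟨j, by rcases hs2 with rfl | rfl <;> simp⟩
    rw [hs'] at hm
    have hsq := pow_le_pow_left₀ dist_nonneg hm 2
    rw [dist_single_sq _ _ _ hs, dist_single_sq _ _ _ hs2] at hsq
    simp only [PiLp.smul_apply, matVec_apply', smul_eq_mul] at hsq
    linarith
  intro j
  by_cases h0 : matVec A x = 0
  · have hz : ∀ j, linF x (A j) = 0 := by
      intro j
      rw [← matVec_apply', h0]; rfl
    simp [hz]
  · have hc : 0 < ‖matVec A x‖⁻¹ := inv_pos.2 (norm_pos_iff.2 h0)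
    have h1 := key j 1 (Or.inl rfl)
    have h2 := key j (-1) (Or.inr rfl)
    rw [abs_le]
    constructor
    · by_contra hcon
      push Not at hcon
      nlinarith [mul_lt_mul_of_pos_left hcon hc]
    · by_contra hcon
      push Not at hcon
      nlinarith [mul_lt_mul_of_pos_left hcon hc]

lemma linF_add {d : ℕ} (p q : EuclideanSpace ℝ (Fin d)) (a : Fin d → ℝ) :
    linF (p + q) a = linF p a + linF q a := by
  simp [linF, mul_add, Finset.sum_add_distrib]

lemma linF_sub {d : ℕ} (p q : EuclideanSpace ℝ (Fin d)) (a : Fin d → ℝ) :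
    linF (p - q) a = linF p a - linF q a := by
  simp [linF, mul_sub, Finset.sum_sub_distrib]

instance gaussMatrix_prob (d : ℕ) : IsProbabilityMeasure (gaussMatrix d) := by
  rw [gaussMatrix_eq]; infer_instance

lemma rowM_real_linF {d : ℕ} (x : EuclideanSpace ℝ (Fin d)) {s : Set ℝ} (hs : MeasurableSet s) :
    (rowM d).real {a | linF x a ∈ s} = (gaussianReal 0 (‖x‖ ^ 2).toNNReal).real s := by
  rw [← map_linF, map_measureReal_apply (measurable_linF x) hs]
  rfl

lemma gaussMatrix_pi {d : ℕ} (S : Fin d → Set (Fin d → ℝ)) :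
    (gaussMatrix d).real {A | ∀ i, A i ∈ S i} = ∏ i, (rowM d).real (S i) := by
  have : {A : Fin d → Fin d → ℝ | ∀ i, A i ∈ S i} = Set.univ.pi S := by
    ext A; simp
  rw [this, gaussMatrix_eq, measureReal_def, Measure.pi_pi, ENNReal.toReal_prod]
  rfl

lemma gaussMatrix_row {d : ℕ} (i : Fin d) {S : Set (Fin d → ℝ)} (hS : MeasurableSet S) :
    (gaussMatrix d).real {A | A i ∈ S} = (rowM d).real S := by
  have := (measurePreserving_eval (fun _ : Fin d => rowM d) i).measureReal_preimage
    hS.nullMeasurableSet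
  rw [gaussMatrix_eq]
  exact this

lemma norm_add_sq_of {d : ℕ} {τ : ℝ} {p q : EuclideanSpace ℝ (Fin d)} (hp : ‖p‖ = 1)
    (hq : ‖q‖ = 1) (hpq : dist p q = τ) : ‖p + q‖ ^ 2 = 4 - τ ^ 2 := by
  have := parallelogram_law_with_norm ℝ p q
  rw [← dist_eq_norm, hpq, hp, hq] at this
  nlinarith

lemma collision_upper {d : ℕ} {τ : ℝ} (hτ0 : 0 < τ) (hτ2 : τ < 2)
    (h : (Fin d → Fin d → ℝ) → EuclideanSpace ℝ (Fin d) → EuclideanSpace ℝ (Fin d))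
    (hh : IsCPHash h) (p q : EuclideanSpace ℝ (Fin d)) (hp : ‖p‖ = 1) (hq : ‖q‖ = 1)
    (hpq : dist p q = τ) (t : ℝ) (ht : 0 ≤ t) :
    (gaussMatrix d).real {A | h A p = h A q} ≤
      2 * ((gaussianReal 0 1).real {z | |z| < t}) ^ d
        + d * (2 * Real.exp (-(2 * t) ^ 2 / (2 * (4 - τ ^ 2)))) := by
  have hσ : 0 < 4 - τ ^ 2 := by nlinarith
  have hsub : {A | h A p = h A q} ⊆
      ({A | ∀ i, A i ∈ {a | |linF p a| < t}} ∪ {A | ∀ i, A i ∈ {a | |linF q a| < t}}) ∪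
        ⋃ i : Fin d, {A | A i ∈ {a | linF (p + q) a ∈ {z | 2 * t ≤ |z|}}} := by
    intro A hA
    obtain ⟨i, s, hs, hA1, hmax1⟩ := hash_spec h hh A p
    obtain ⟨i', s', hs', hA2, hmax2⟩ := hash_spec h hh A q
    have heq : EuclideanSpace.single i s = EuclideanSpace.single i' s' := by
      rw [← hA1, ← hA2]; exact hA
    have hs0 : s ≠ 0 := by rcases hs with rfl | rfl <;> norm_num
    have hii : i = i' := by
      by_contra hne
      have := congrArg (fun v : EuclideanSpace ℝ (Fin d) => v i) heq
      simp [hne] at this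
      exact hs0 this
    subst hii
    have hss : s = s' := by
      have := congrArg (fun v : EuclideanSpace ℝ (Fin d) => v i) heq
      simpa using this
    subst hss
    by_cases h1 : s * linF p (A i) < t
    · left; left; intro j; exact (hmax1 j).trans_lt h1
    by_cases h2 : s * linF q (A i) < t
    · left; right; intro j; exact (hmax2 j).trans_lt h2
    right
    refine Set.mem_iUnion.2 ⟨i, ?_⟩
    show 2 * t ≤ |linF (p + q) (A i)|
    rw [linF_add]
    push Not at h1 h2
    refine le_abs.2 ?_
    rcases hs with rfl | rfl
    · left; linarith
    · right; linarith
  have hmeas : MeasurableSet {z : ℝ | |z| < t} := measurableSet_lt (by fun_prop) (by fun_prop)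
  have hbox : ∀ x : EuclideanSpace ℝ (Fin d), ‖x‖ = 1 →
      (gaussMatrix d).real {A | ∀ i, A i ∈ {a | |linF x a| < t}}
        = ((gaussianReal 0 1).real {z | |z| < t}) ^ d := by
    intro x hx
    rw [gaussMatrix_pi]
    have := rowM_real_linF x hmeas
    simp only [Set.mem_ofPred_eq, hx] at this
    simp [this]
  have hmeas2 : MeasurableSet {z : ℝ | 2 * t ≤ |z|} := measurableSet_le (by fun_prop) (by fun_prop)
  refine (measureReal_mono hsub).trans ?_
  refine (measureReal_union_le _ _).trans ?_
  refine add_le_add ((measureReal_union_le _ _).trans (by rw [hbox p hp, hbox q hq]; linarith)) ?_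
  refine (measureReal_iUnion_fintype_le _).trans ?_
  refine (Finset.sum_le_card_nsmul _ _ (2 * Real.exp (-(2 * t) ^ 2 / (2 * (4 - τ ^ 2)))) ?_).trans
    (by simp)
  intro i _
  rw [gaussMatrix_row i (S := {a | linF (p + q) a ∈ {z : ℝ | 2 * t ≤ |z|}})
    ((measurable_linF _) hmeas2), rowM_real_linF _ hmeas2,
    norm_add_sq_of hp hq hpq]
  exact gauss_abs_tail _ hσ _ (by linarith)

lemma prob_S_lower {d : ℕ} {τ : ℝ} (hτ0 : 0 < τ) (hτ2 : τ < 2)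
    (p q : EuclideanSpace ℝ (Fin d)) (hp : ‖p‖ = 1) (hq : ‖q‖ = 1)
    (hpq : dist p q = τ) (t w : ℝ) (ht : 0 ≤ t) (hw : 0 < w) :
    (w * ((√(2 * π * (4 - τ ^ 2)))⁻¹ * Real.exp (-(2 * t + 2 * w) ^ 2 / (2 * (4 - τ ^ 2))))) *
      (2 * w * ((√(2 * π * τ ^ 2))⁻¹ * Real.exp (-w ^ 2 / (2 * τ ^ 2))))
      ≤ (rowM d).real {a | t ≤ linF p a ∧ t ≤ linF q a} := by
  have hσ : 0 < 4 - τ ^ 2 := by nlinarith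
  have hin : inner ℝ (p + q) (p - q) = 0 := by
    rw [inner_sub_right, inner_add_left, inner_add_left, real_inner_self_eq_norm_sq,
      real_inner_self_eq_norm_sq, hp, hq, real_inner_comm]
    ring
  have hI := indep_linF _ _ hin
  have hsub : linF (p + q) ⁻¹' Set.Icc (2 * t + w) (2 * t + 2 * w) ∩ linF (p - q) ⁻¹' Set.Icc (-w) w
      ⊆ {a | t ≤ linF p a ∧ t ≤ linF q a} := by
    rintro a ⟨h1, h2⟩
    simp only [Set.mem_preimage, linF_add, linF_sub, Set.mem_Icc] at h1 h2
    constructor <;> linarith [h1.1, h2.1, h2.2]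
  refine le_trans ?_ (measureReal_mono hsub)
  have hprod := hI.measure_inter_preimage_eq_mul _ _
    (measurableSet_Icc (a := 2 * t + w) (b := 2 * t + 2 * w)) (measurableSet_Icc (a := -w) (b := w))
  rw [measureReal_def, hprod, ENNReal.toReal_mul]
  have e1 := rowM_real_linF (p + q) (measurableSet_Icc (a := 2 * t + w) (b := 2 * t + 2 * w))
  have e2 := rowM_real_linF (p - q) (measurableSet_Icc (a := -w) (b := w))
  rw [norm_add_sq_of hp hq hpq] at e1
  rw [← dist_eq_norm, hpq] at e2
  have b1 := gauss_Icc_lower (4 - τ ^ 2) hσ (2 * t + w) (2 * t + 2 * w) (2 * t + 2 * w) (by linarith)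
    (by rw [abs_of_nonneg] <;> linarith) (by rw [abs_of_nonneg]; linarith)
  have b2 := gauss_Icc_lower (τ ^ 2) (by positivity) (-w) w w (by linarith)
    (by rw [abs_neg, abs_of_pos hw]) (by rw [abs_of_pos hw])
  rw [← e1] at b1
  rw [← e2] at b2
  refine mul_le_mul ?_ ?_ (by positivity) ENNReal.toReal_nonneg
  · refine le_trans (le_of_eq ?_) b1
    ring
  · refine le_trans (le_of_eq ?_) b2
    ring

lemma prob_T_lower {d : ℕ}
    (p q : EuclideanSpace ℝ (Fin d)) (hp : ‖p‖ = 1) (hq : ‖q‖ = 1) (t : ℝ) (ht : 0 ≤ t) :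
    1 - 4 * Real.exp (-t ^ 2 / 2) ≤ (rowM d).real {a | |linF p a| < t ∧ |linF q a| < t} := by
  have hmeas2 : MeasurableSet {z : ℝ | t ≤ |z|} := measurableSet_le (by fun_prop) (by fun_prop)
  have hx : ∀ x : EuclideanSpace ℝ (Fin d), ‖x‖ = 1 →
      (rowM d).real {a | linF x a ∈ {z | t ≤ |z|}} ≤ 2 * Real.exp (-t ^ 2 / 2) := by
    intro x hx
    rw [rowM_real_linF _ hmeas2, hx]
    simpa using gauss_abs_tail 1 one_pos t ht
  have hun : (Set.univ : Set (Fin d → ℝ)) ⊆ {a | |linF p a| < t ∧ |linF q a| < t} ∪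
      ({a | linF p a ∈ {z | t ≤ |z|}} ∪ {a | linF q a ∈ {z | t ≤ |z|}}) := by
    intro a _
    by_cases h1 : |linF p a| < t
    · by_cases h2 : |linF q a| < t
      · exact Or.inl ⟨h1, h2⟩
      · exact Or.inr (Or.inr (not_lt.1 h2))
    · exact Or.inr (Or.inl (not_lt.1 h1))
  have h1 := measureReal_mono (μ := rowM d) hun
  rw [probReal_univ] at h1
  have h2 := measureReal_union_le (μ := rowM d) {a | |linF p a| < t ∧ |linF q a| < t}
      ({a | linF p a ∈ {z | t ≤ |z|}} ∪ {a | linF q a ∈ {z | t ≤ |z|}})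
  have h3 := measureReal_union_le (μ := rowM d) {a | linF p a ∈ {z | t ≤ |z|}}
    {a | linF q a ∈ {z | t ≤ |z|}}
  linarith [hx p hp, hx q hq]

lemma collision_lower {d : ℕ}
    (h : (Fin d → Fin d → ℝ) → EuclideanSpace ℝ (Fin d) → EuclideanSpace ℝ (Fin d))
    (hh : IsCPHash h) (p q : EuclideanSpace ℝ (Fin d)) (t : ℝ) (ht : 0 < t) :
    d * ((rowM d).real {a | t ≤ linF p a ∧ t ≤ linF q a} *
      ((rowM d).real {a | |linF p a| < t ∧ |linF q a| < t}) ^ (d - 1)) ≤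
    (gaussMatrix d).real {A | h A p = h A q} := by
  set S : Set (Fin d → ℝ) := {a | t ≤ linF p a ∧ t ≤ linF q a} with hS
  set T : Set (Fin d → ℝ) := {a | |linF p a| < t ∧ |linF q a| < t} with hT
  have hSm : MeasurableSet S := (measurableSet_le measurable_const (measurable_linF p)).inter
    (measurableSet_le measurable_const (measurable_linF q))
  have hTm : MeasurableSet T :=
    (measurableSet_lt (measurable_linF p).abs measurable_const).inter
    (measurableSet_lt (measurable_linF q).abs measurable_const)
  let B : Fin d → Set (Fin d → Fin d → ℝ) := fun i => {A | ∀ j, A j ∈ Function.update (fun _ => T) i S j}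
  have hBm : ∀ i, MeasurableSet (B i) := by
    intro i
    have : B i = ⋂ j, (fun A : Fin d → Fin d → ℝ => A j) ⁻¹' (Function.update (fun _ => T) i S j) := by
      ext A; simp [B]
    rw [this]
    refine MeasurableSet.iInter fun j => measurable_pi_apply j ?_
    by_cases hj : j = i
    · subst hj; simpa using hSm
    · simpa [hj] using hTm
  have hBval : ∀ i, (gaussMatrix d).real (B i) = (rowM d).real S * (rowM d).real T ^ (d - 1) := by
    intro i
    simp only [B]
    rw [gaussMatrix_pi, ← Finset.mul_prod_erase _ _ (Finset.mem_univ i)]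
    simp only [Function.update_self]
    congr 1
    rw [Finset.prod_congr rfl (g := fun _ => (rowM d).real T)]
    · simp [Finset.card_erase_of_mem]
    · intro j hj
      rw [Function.update_of_ne (Finset.ne_of_mem_erase hj)]
  have hmem : ∀ i A, A ∈ B i → A i ∈ S ∧ ∀ j, j ≠ i → A j ∈ T := by
    intro i A hA
    refine ⟨by simpa using hA i, fun j hj => by simpa [hj] using hA j⟩
  have hdisj : Pairwise (Function.onFun Disjoint B) := by
    intro i j hij
    refine Set.disjoint_left.2 fun A hA hA' => ?_
    have h1 := (hmem i A hA).1
    have h2 := (hmem j A hA').2 i hij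
    have h3 := h1.1
    have h4 := h2.1
    linarith [le_abs_self (linF p (A i))]
  have hsub : (⋃ i, B i) ⊆ {A | h A p = h A q} := by
    intro A hA
    obtain ⟨i, hi⟩ := Set.mem_iUnion.1 hA
    obtain ⟨hSi, hTi⟩ := hmem i A hi
    have aux : ∀ x : EuclideanSpace ℝ (Fin d), t ≤ linF x (A i) →
        (∀ j, j ≠ i → |linF x (A j)| < t) → h A x = EuclideanSpace.single i 1 := by
      intro x hx1 hx2
      obtain ⟨k, s, hs, hA1, hmax⟩ := hash_spec h hh A x
      have hki : k = i := by
        by_contra hne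
        have h1 := hmax i
        have h2 := hx2 k hne
        have h3 := le_abs_self (linF x (A i))
        have h4 := le_abs_self (linF x (A k))
        have h5 := neg_abs_le (linF x (A k))
        rcases hs with rfl | rfl <;> linarith
      subst hki
      rcases hs with rfl | rfl
      · exact hA1
      · have h1 := hmax k
        have h3 := le_abs_self (linF x (A k))
        linarith
    show h A p = h A q
    rw [aux p hSi.1 (fun j hj => (hTi j hj).1), aux q hSi.2 (fun j hj => (hTi j hj).2)]
  have hU : (gaussMatrix d).real (⋃ i, B i) = ∑ i, (gaussMatrix d).real (B i) :=
    measureReal_iUnion_fintype hdisj hBm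
  calc _ = ∑ i, (gaussMatrix d).real (B i) := by simp [hBval]
    _ = _ := hU.symm
    _ ≤ _ := measureReal_mono hsub

lemma upper_final {d : ℕ} {τ : ℝ} (hτ0 : 0 < τ) (hτ2 : τ < 2)
    (h : (Fin d → Fin d → ℝ) → EuclideanSpace ℝ (Fin d) → EuclideanSpace ℝ (Fin d))
    (hh : IsCPHash h) (p q : EuclideanSpace ℝ (Fin d)) (hp : ‖p‖ = 1) (hq : ‖q‖ = 1)
    (hpq : dist p q = τ) (L : ℝ) (hd : (0 : ℝ) < d) (hL : L = Real.log d)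
    (h1 : 1 ≤ Real.log L) (h2 : 6 * Real.log L ≤ L)
    (h3 : 2 * (τ ^ 2 / (4 - τ ^ 2)) ≤ L * ((√(2 * π))⁻¹ * Real.exp (-3 / 2))) :
    (gaussMatrix d).real {A | h A p = h A q} ≤
      4 * Real.exp (-(τ ^ 2 / (4 - τ ^ 2)) * L + 12 / (4 - τ ^ 2) * Real.log L) := by
  have hv : 0 < 4 - τ ^ 2 := by nlinarith
  have hL1 : 1 ≤ L := by linarith
  have hdL : (d : ℝ) = Real.exp L := by rw [hL, Real.exp_log hd]
  set t : ℝ := √(2 * L - 6 * Real.log L) with ht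
  have ht2 : t ^ 2 = 2 * L - 6 * Real.log L := Real.sq_sqrt (by linarith)
  have ht0 : 0 ≤ t := Real.sqrt_nonneg _
  have ht1 : 1 ≤ t := by
    rw [ht]; exact Real.one_le_sqrt.2 (by linarith)
  have htL : t ≤ 2 * L := by nlinarith
  set c0 : ℝ := (√(2 * π))⁻¹ * Real.exp (-3 / 2) with hc0
  have hc0pos : 0 < c0 := by positivity
  set ρ : ℝ := τ ^ 2 / (4 - τ ^ 2) with hρ
  have hρ0 : 0 < ρ := by positivity
  -- one dimensional tail
  have hNl : ρ * L / d ≤ (gaussianReal 0 1).real (Set.Icc t (t + 1 / t)) := by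
    have htp : 0 < 1 / t := by positivity
    have := gauss_Icc_lower 1 one_pos t (t + 1 / t) (t + 1 / t) (by linarith)
      (by rw [abs_of_nonneg ht0]; linarith) (by rw [abs_of_nonneg]; linarith)
    rw [Real.toNNReal_one] at this
    refine le_trans ?_ this
    have hsq : (t + 1 / t) ^ 2 ≤ t ^ 2 + 3 := by
      have e : (t + 1 / t) ^ 2 = t ^ 2 + 2 + (1 / t) ^ 2 := by field_simp; ring
      have : (1 / t) ^ 2 ≤ 1 := pow_le_one₀ htp.le (by rw [div_le_one (by linarith)]; exact ht1)
      linarith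
    have hexp : Real.exp (-3 / 2) * (L ^ 3 / d) ≤ Real.exp (-(t + 1 / t) ^ 2 / (2 * 1)) := by
      have e3 : L ^ 3 / d = Real.exp (3 * Real.log L - L) := by
        rw [Real.exp_sub, ← hdL]
        congr 1
        rw [show (3 : ℝ) * Real.log L = Real.log (L ^ 3) by simp, Real.exp_log (by positivity)]
      rw [e3, ← Real.exp_add]
      apply Real.exp_le_exp.2
      linarith
    have hst : 1 / (2 * L) ≤ t + 1 / t - t := by
      rw [add_sub_cancel_left]
      exact one_div_le_one_div_of_le (by linarith) htL
    calc ρ * L / d ≤ (L * c0 / 2) * L / d := by gcongr; linarith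
      _ = 1 / (2 * L) * ((√(2 * π * 1))⁻¹ * (Real.exp (-3 / 2) * (L ^ 3 / d))) := by
        rw [hc0, mul_one]; field_simp
      _ ≤ _ := by
        have hnn : 0 ≤ t + 1 / t - t := by linarith
        gcongr
  have hN : (gaussianReal 0 1).real {z | |z| < t} ≤ Real.exp (-(ρ * L / d)) := by
    have hdis : Disjoint {z : ℝ | |z| < t} (Set.Icc t (t + 1 / t)) := by
      refine Set.disjoint_left.2 fun z hz hz' => ?_
      have hz1 : |z| < t := hz
      linarith [hz'.1, le_abs_self z]
    have := measureReal_union (μ := gaussianReal 0 1) hdis measurableSet_Icc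
    have h1 : (gaussianReal 0 1).real ({z : ℝ | |z| < t} ∪ (Set.Icc t (t + 1 / t))) ≤ 1 :=
      measureReal_le_one
    linarith [Real.add_one_le_exp (-(ρ * L / d))]
  have hNd : ((gaussianReal 0 1).real {z | |z| < t}) ^ d ≤ Real.exp (-ρ * L) := by
    calc _ ≤ (Real.exp (-(ρ * L / d))) ^ d := by gcongr
      _ = _ := by
        rw [← Real.exp_nat_mul]
        congr 1
        field_simp
  have hmain := collision_upper hτ0 hτ2 h hh p q hp hq hpq t ht0
  refine hmain.trans ?_
  have h2nd : (d : ℝ) * (2 * Real.exp (-(2 * t) ^ 2 / (2 * (4 - τ ^ 2))))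
      = 2 * Real.exp (-ρ * L + 12 / (4 - τ ^ 2) * Real.log L) := by
    rw [mul_left_comm, hdL, ← Real.exp_add]
    congr 2
    rw [mul_pow, ht2, hρ]
    field_simp
    ring
  have h1st : Real.exp (-ρ * L) ≤ Real.exp (-ρ * L + 12 / (4 - τ ^ 2) * Real.log L) := by
    apply Real.exp_le_exp.2
    have : 0 ≤ 12 / (4 - τ ^ 2) * Real.log L := by positivity
    linarith
  rw [h2nd]
  linarith

lemma lower_final {d : ℕ} {τ : ℝ} (hτ0 : 0 < τ) (hτ2 : τ < 2)
    (h : (Fin d → Fin d → ℝ) → EuclideanSpace ℝ (Fin d) → EuclideanSpace ℝ (Fin d))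
    (hh : IsCPHash h) (p q : EuclideanSpace ℝ (Fin d)) (hp : ‖p‖ = 1) (hq : ‖q‖ = 1)
    (hpq : dist p q = τ) (L : ℝ) (hd : (1 : ℝ) ≤ d) (hL : L = Real.log d)
    (h1 : 1 ≤ L) (h8 : Real.log 8 ≤ L) :
    ((√(2 * π * (4 - τ ^ 2)))⁻¹ * (√(2 * π * τ ^ 2))⁻¹ *
      Real.exp (-(4 * Real.log 8 + 6) / (4 - τ ^ 2) - 1 / (2 * τ ^ 2)) / 4) *
      Real.exp (-(τ ^ 2 / (4 - τ ^ 2)) * L - Real.log L) ≤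
    (gaussMatrix d).real {A | h A p = h A q} := by
  have hv : 0 < 4 - τ ^ 2 := by nlinarith
  have hd0 : (0 : ℝ) < d := by linarith
  have hdL : (d : ℝ) = Real.exp L := by rw [hL, Real.exp_log hd0]
  have hl8 : 0 < Real.log 8 := Real.log_pos (by norm_num)
  set t : ℝ := √(2 * (L + Real.log 8)) with ht
  have ht2 : t ^ 2 = 2 * (L + Real.log 8) := Real.sq_sqrt (by linarith)
  have ht1 : 1 ≤ t := by
    rw [ht]; exact Real.one_le_sqrt.2 (by linarith)
  have ht0 : 0 < t := by linarith
  have hS := prob_S_lower hτ0 hτ2 p q hp hq hpq t (1 / t) ht0.le (by positivity)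
  have hT := prob_T_lower p q hp hq t ht0.le
  have hC := collision_lower h hh p q t ht0
  set PS := (rowM d).real {a | t ≤ linF p a ∧ t ≤ linF q a}
  set PT := (rowM d).real {a | |linF p a| < t ∧ |linF q a| < t}
  have hexpT : 4 * Real.exp (-t ^ 2 / 2) = 1 / (2 * d) := by
    rw [ht2, show -(2 * (L + Real.log 8)) / 2 = -L - Real.log 8 by ring, Real.exp_sub, Real.exp_neg,
      ← hdL, Real.exp_log (by norm_num)]
    field_simp
    norm_num
  have hPT : 1 / 2 ≤ PT ^ (d - 1) := by
    have hle : 1 / (2 * (d : ℝ)) ≤ 1 / 2 := one_div_le_one_div_of_le (by norm_num) (by linarith)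
    have hb := one_add_mul_le_pow (a := -(1 / (2 * (d : ℝ)))) (by linarith) (d - 1)
    have hcast : ((d - 1 : ℕ) : ℝ) ≤ d := by exact_mod_cast Nat.sub_le d 1
    have hh2 : (d : ℝ) * (1 / (2 * d)) = 1 / 2 := by field_simp
    have hnn : 0 ≤ 1 / (2 * (d : ℝ)) := by positivity
    have hmul := mul_le_mul_of_nonneg_right hcast hnn
    calc 1 / 2 ≤ 1 + ((d - 1 : ℕ) : ℝ) * -(1 / (2 * (d : ℝ))) := by linarith
      _ ≤ _ := hb
      _ ≤ _ := by
        apply pow_le_pow_left₀ (by linarith)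
        rw [hexpT] at hT
        linarith
  have hPS0 : 0 ≤ PS := measureReal_nonneg
  have htL : t ^ 2 ≤ 4 * L := by linarith
  have hw1 : (1 / t) ^ 2 ≤ 1 := pow_le_one₀ (by positivity) (by rw [div_le_one (by linarith)]; exact ht1)
  set c1 := (√(2 * π * (4 - τ ^ 2)))⁻¹ with hc1
  set c2 := (√(2 * π * τ ^ 2))⁻¹ with hc2
  have hc1p : 0 < c1 := by positivity
  have hc2p : 0 < c2 := by positivity
  have hE1 : Real.exp (-(4 * Real.log 8 + 6) / (4 - τ ^ 2) - 4 / (4 - τ ^ 2) * L) ≤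
      Real.exp (-(2 * t + 2 * (1 / t)) ^ 2 / (2 * (4 - τ ^ 2))) := by
    apply Real.exp_le_exp.2
    have e : (2 * t + 2 * (1 / t)) ^ 2 = 4 * t ^ 2 + 8 + 4 * (1 / t) ^ 2 := by field_simp; ring
    rw [e, ht2]
    have : -(4 * Real.log 8 + 6) / (4 - τ ^ 2) - 4 / (4 - τ ^ 2) * L
      = -(8 * Real.log 8 + 12 + 8 * L) / (2 * (4 - τ ^ 2)) := by field_simp; ring
    rw [this]
    refine div_le_div_of_nonneg_right ?_ (by positivity)
    linarith
  have hE2 : Real.exp (- (1 / (2 * τ ^ 2))) ≤ Real.exp (-(1 / t) ^ 2 / (2 * τ ^ 2)) := by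
    apply Real.exp_le_exp.2
    rw [← neg_div]
    gcongr
  have hw2 : 1 / (4 * L) ≤ (1 / t) ^ 2 := by
    rw [one_div_pow]
    exact one_div_le_one_div_of_le (by positivity) htL
  calc _ = d * ((2 * (1 / (4 * L)) * (c1 * c2)) *
        (Real.exp (-(4 * Real.log 8 + 6) / (4 - τ ^ 2) - 4 / (4 - τ ^ 2) * L) *
          Real.exp (- (1 / (2 * τ ^ 2)))) * (1 / 2)) := by
        have e : Real.exp (-(τ ^ 2 / (4 - τ ^ 2)) * L - Real.log L) =
            d * Real.exp (- (4 / (4 - τ ^ 2) * L)) / L := by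
          rw [Real.exp_sub, Real.exp_log (by linarith), hdL, ← Real.exp_add]
          congr 2
          field_simp
          ring
        rw [e, sub_eq_add_neg (-(4 * Real.log 8 + 6) / (4 - τ ^ 2)),
          sub_eq_add_neg (-(4 * Real.log 8 + 6) / (4 - τ ^ 2)), Real.exp_add, Real.exp_add]
        field_simp
        try ring
    _ ≤ d * ((2 * (1 / t) ^ 2 * (c1 * c2)) *
        (Real.exp (-(2 * t + 2 * (1 / t)) ^ 2 / (2 * (4 - τ ^ 2))) *
          Real.exp (-(1 / t) ^ 2 / (2 * τ ^ 2))) * (PT ^ (d - 1))) := by gcongr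
    _ ≤ d * (PS * PT ^ (d - 1)) := by
        have hpt : 0 ≤ PT ^ (d - 1) := by linarith
        gcongr
        refine le_trans (le_of_eq ?_) hS
        ring
    _ ≤ _ := hC

/-- For `0 < τ < 2`, the collision probability of the cross-polytope hash of two unit vectors
at distance `τ` satisfies
`ln (1 / Pr[h_A(p) = h_A(q)]) = (τ²/(4 - τ²))·ln d + O_τ(ln ln d)`. -/
theorem cross_polytope_collision_probability (τ : ℝ) (hτ0 : 0 < τ) (hτ2 : τ < 2) :
    ∃ C : ℝ, 0 < C ∧ ∃ d₀ : ℕ, ∀ d : ℕ, d₀ ≤ d →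
      ∀ h : (Fin d → Fin d → ℝ) → EuclideanSpace ℝ (Fin d) → EuclideanSpace ℝ (Fin d),
        IsCPHash h →
          ∀ p q : EuclideanSpace ℝ (Fin d), ‖p‖ = 1 → ‖q‖ = 1 → dist p q = τ →
            |Real.log (1 / (gaussMatrix d {A | h A p = h A q}).toReal)
                - τ ^ 2 / (4 - τ ^ 2) * Real.log d|
              ≤ C * Real.log (Real.log d) := by
  have hv : 0 < 4 - τ ^ 2 := by nlinarith
  set ρ := τ ^ 2 / (4 - τ ^ 2) with hρ
  set K : ℝ := (√(2 * π * (4 - τ ^ 2)))⁻¹ * (√(2 * π * τ ^ 2))⁻¹ *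
      Real.exp (-(4 * Real.log 8 + 6) / (4 - τ ^ 2) - 1 / (2 * τ ^ 2)) / 4 with hK
  have hKpos : 0 < K := by positivity
  have hLt : Filter.Tendsto (fun d : ℕ => Real.log (d : ℝ)) Filter.atTop Filter.atTop :=
    Real.tendsto_log_atTop.comp tendsto_natCast_atTop_atTop
  have hc0pos : 0 < (√(2 * π))⁻¹ * Real.exp (-3 / 2) := by positivity
  have e1 : ∀ᶠ L : ℝ in Filter.atTop, 1 ≤ Real.log L := Real.tendsto_log_atTop.eventually_ge_atTop 1
  have e2 : ∀ᶠ L : ℝ in Filter.atTop, 6 * Real.log L ≤ L := by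
    have := Real.isLittleO_log_id_atTop.def (c := 1 / 6) (by norm_num)
    filter_upwards [this, Filter.eventually_ge_atTop 0] with L hL h0
    simp only [id, Real.norm_eq_abs, abs_of_nonneg h0] at hL
    linarith [le_abs_self (Real.log L)]
  have e3 := Filter.eventually_ge_atTop (2 * ρ / ((√(2 * π))⁻¹ * Real.exp (-3 / 2)))
  have e4 := Filter.eventually_ge_atTop (Real.log 8)
  have e5 := Filter.eventually_ge_atTop (1 : ℝ)
  have eall := (hLt.eventually (e1.and (e2.and (e3.and (e4.and e5))))).and
    (Filter.eventually_ge_atTop 1)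
  obtain ⟨d₀, hd₀⟩ := Filter.eventually_atTop.1 eall
  refine ⟨1 + |Real.log K| + 12 / (4 - τ ^ 2) + Real.log 4, ?_, d₀, ?_⟩
  · have : 0 ≤ Real.log 4 := Real.log_nonneg (by norm_num)
    have : 0 ≤ 12 / (4 - τ ^ 2) := by positivity
    have : 0 ≤ |Real.log K| := abs_nonneg _
    linarith
  intro d hd h hh p q hp hq hpq
  obtain ⟨⟨g1, g2, g3, g4, g5⟩, g6⟩ := hd₀ d hd
  have hd1 : (1 : ℝ) ≤ d := by exact_mod_cast g6
  have hup := upper_final hτ0 hτ2 h hh p q hp hq hpq (Real.log d) (by linarith) rfl g1 g2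
    (by rwa [div_le_iff₀ hc0pos] at g3)
  have hlo := lower_final hτ0 hτ2 h hh p q hp hq hpq (Real.log d) hd1 rfl g5 g4
  rw [← hK, ← hρ] at hlo
  rw [← hρ] at hup
  change |Real.log (1 / (gaussMatrix d).real {A | h A p = h A q}) - _| ≤ _
  set P := (gaussMatrix d).real {A | h A p = h A q}
  set L := Real.log d
  have hP : 0 < P := lt_of_lt_of_le (by positivity) hlo
  have l1 := Real.log_le_log hP hup
  have l2 := Real.log_le_log (by positivity) hlo
  rw [Real.log_mul (by norm_num) (Real.exp_ne_zero _), Real.log_exp] at l1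
  rw [Real.log_mul hKpos.ne' (Real.exp_ne_zero _), Real.log_exp] at l2
  rw [one_div, Real.log_inv]
  have n1 : 0 ≤ Real.log 4 := Real.log_nonneg (by norm_num)
  have n2 : 0 ≤ 12 / (4 - τ ^ 2) := by positivity
  have n3 : 0 ≤ |Real.log K| := abs_nonneg _
  have n4 := neg_abs_le (Real.log K)
  have m1 : |Real.log K| ≤ |Real.log K| * Real.log L := le_mul_of_one_le_right n3 g1
  have m2 : Real.log 4 ≤ Real.log 4 * Real.log L := le_mul_of_one_le_right n1 g1
  have m3 : 0 ≤ 12 / (4 - τ ^ 2) * Real.log L := mul_nonneg n2 (by linarith)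
  rw [abs_le]
  constructor <;> linarith
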